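/- Let A ⊆ B be a symmetric C*-inclusion. Then the positive cone A⁺ residually supports B if and only if A⁺ fills B. -/

import Mathlib

/- Common definitions for C*-inclusions, ideals, Cuntz subequivalence,
   supporting/filling families and pure infiniteness. -/

namespace KM

variable {B : Type*} [NonUnitalCStarAlgebra B] [PartialOrder B]

/-- `J` is a closed two-sided ideal of the C*-algebra `C` (given as a subset of `B`). -/
def IsIdealIn (C J : Set B) : Prop :=
  J ⊆ C ∧ IsClosed J ∧ (0 : B) ∈ J ∧ (∀ x ∈ J, ∀ y ∈ J, x + y ∈ J) ∧
    (∀ (c : ℂ), ∀ x ∈ J, c • x ∈ J) ∧ (∀ x ∈ J, ∀ c ∈ C, c * x ∈ J ∧ x * c ∈ J)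

/-- `J` is a closed two-sided ideal of `B`. -/
def IsIdeal (J : Set B) : Prop := IsIdealIn Set.univ J

/-- `A` is a C*-subalgebra of `B`: a closed `*`-subalgebra. -/
def IsSubCStar (A : Set B) : Prop :=
  IsClosed A ∧ (0 : B) ∈ A ∧ (∀ x ∈ A, ∀ y ∈ A, x + y ∈ A) ∧
    (∀ (c : ℂ), ∀ x ∈ A, c • x ∈ A) ∧ (∀ x ∈ A, ∀ y ∈ A, x * y ∈ A) ∧
    (∀ x ∈ A, star x ∈ A)

/-- The smallest closed two-sided ideal of the C*-algebra `C` containing `S`. -/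
def idealGenIn (C S : Set B) : Set B := ⋂₀ {J : Set B | IsIdealIn C J ∧ S ⊆ J}

/-- The smallest closed two-sided ideal of `B` containing `S`; for an ideal `I` of a
subalgebra `A` this is the induced ideal `BIB`. -/
def idealGen (S : Set B) : Set B := idealGenIn Set.univ S

/-- `I` is a restricted ideal of the subalgebra `A`, i.e. `I = J ∩ A` for an ideal `J` of `B`. -/
def IsRestricted (A I : Set B) : Prop := ∃ J : Set B, IsIdeal J ∧ I = J ∩ A

/-- `J` is an induced ideal of `B`: `J = BIB` for some ideal `I` of `A`. -/
def IsInduced (A J : Set B) : Prop := ∃ I : Set B, IsIdealIn A I ∧ J = idealGen I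

/-- `A` separates ideals in `B`. -/
def SeparatesIdeals (A : Set B) : Prop :=
  ∀ J₁ J₂ : Set B, IsIdeal J₁ → IsIdeal J₂ → J₁ ∩ A = J₂ ∩ A → J₁ = J₂

/-- Cuntz subequivalence `a ≼ b`. -/
def CuntzBelow (a b : B) : Prop :=
  ∀ ε : ℝ, 0 < ε → ∃ x : B, ‖a - star x * b * x‖ < ε

/-- `F` supports `B`. -/
def Supports (F : Set B) : Prop :=
  ∀ b : B, 0 ≤ b → b ≠ 0 → ∃ a ∈ F, a ≠ 0 ∧ CuntzBelow a b

/-- `F` residually supports the C*-algebra `C ⊆ B`: for every ideal `J` of `C`, the image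
of `F` in `C/J` supports `C/J`, phrased concretely via the distance to `J`. -/
def ResiduallySupportsIn (C F : Set B) : Prop :=
  ∀ J : Set B, IsIdealIn C J → ∀ b ∈ C, 0 ≤ b → b ∉ J →
    ∃ a ∈ F, a ∉ J ∧ ∀ ε : ℝ, 0 < ε → ∃ x ∈ C,
      Metric.infDist (a - star x * b * x) J < ε

/-- `F` residually supports `B`. -/
def ResiduallySupports (F : Set B) : Prop := ResiduallySupportsIn Set.univ F

/-- `x` lies in `aB = {a c : c ∈ B}`. -/
def MemRightMul (a x : B) : Prop := ∃ c : B, x = a * c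

/-- `a` is properly infinite in `B`. -/
def ProperlyInfinite (a : B) : Prop :=
  ∀ ε : ℝ, 0 < ε → ∃ x y : B, MemRightMul a x ∧ MemRightMul a y ∧
    ‖star x * x - a‖ ≤ ε ∧ ‖star y * y - a‖ ≤ ε ∧ ‖star x * y‖ ≤ ε

/-- `a` is infinite in `B`. -/
def InfiniteElt (a : B) : Prop :=
  ∃ b : B, 0 ≤ b ∧ b ≠ 0 ∧ ∀ ε : ℝ, 0 < ε → ∃ x y : B,
    MemRightMul a x ∧ MemRightMul a y ∧
    ‖star x * x - a‖ ≤ ε ∧ ‖star y * y - b‖ ≤ ε ∧ ‖star x * y‖ ≤ ε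

/-- The pair `a, b` is separated in `B`. -/
def SeparatedPair (a b : B) : Prop :=
  ∀ ε : ℝ, 0 < ε → ∃ x y : B, MemRightMul a x ∧ MemRightMul b y ∧
    ‖star x * x - a‖ ≤ ε ∧ ‖star y * y - b‖ ≤ ε ∧ ‖star x * y‖ ≤ ε

/-- A character of `B`: a nonzero multiplicative linear functional `B → ℂ`. -/
def IsCharacter (φ : B →ₗ[ℂ] ℂ) : Prop :=
  (∀ x y : B, φ (x * y) = φ x * φ y) ∧ φ ≠ 0

/-- `B` is purely infinite: it admits no characters and for nonzero positive `a, b`,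
`a ≼ b` iff `a` lies in the ideal generated by `b`. -/
def PurelyInfinite (B : Type*) [NonUnitalCStarAlgebra B] [PartialOrder B] : Prop :=
  (¬ ∃ φ : B →ₗ[ℂ] ℂ, IsCharacter φ) ∧
    ∀ a b : B, 0 ≤ a → a ≠ 0 → 0 ≤ b → b ≠ 0 → (CuntzBelow a b ↔ a ∈ idealGen {b})

/-- `p` is a projection. -/
def IsProjection (p : B) : Prop := star p = p ∧ p * p = p

/-- `B` has the ideal property: projections separate ideals. -/
def IdealProperty (B : Type*) [NonUnitalCStarAlgebra B] [PartialOrder B] : Prop :=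
  ∀ J₁ J₂ : Set B, IsIdeal J₁ → IsIdeal J₂ →
    (∀ p : B, IsProjection p → (p ∈ J₁ ↔ p ∈ J₂)) → J₁ = J₂

/-- `B` is strongly purely infinite: every pair of positive elements is separated. -/
def StronglyPurelyInfinite (B : Type*) [NonUnitalCStarAlgebra B] [PartialOrder B] : Prop :=
  ∀ a b : B, 0 ≤ a → 0 ≤ b → SeparatedPair a b

/-- `D` is a hereditary C*-subalgebra of `B`. -/
def IsHereditary (D : Set B) : Prop :=
  IsSubCStar D ∧ ∀ b d : B, d ∈ D → 0 ≤ b → b ≤ d → b ∈ D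

/-- `F` fills `B`. -/
def Fills (F : Set B) : Prop :=
  ∀ D : Set B, IsHereditary D → (∃ d ∈ D, d ≠ 0) →
    ∀ J : Set B, IsIdeal J → ¬ D ⊆ J →
      ∃ z : B, z ∉ J ∧ z * star z ∈ D ∧ star z * z ∈ F

/-- Closed linear span of a subset of `B`. -/
def closSpan (S : Set B) : Set B := closure ↑(Submodule.span ℂ S)

/-- The C*-inclusion `A ⊆ B` is symmetric. -/
def SymmetricInclusion (A : Set B) : Prop :=
  ∀ I : Set B, IsRestricted A I →
    closSpan {z : B | ∃ x ∈ I, ∃ b : B, z = x * b} =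
      closSpan {z : B | ∃ b : B, ∃ x ∈ I, z = b * x}

/-- `b` is a normaliser of `A` in `B`. -/
def IsNormalizer (A : Set B) (b : B) : Prop :=
  (∀ a ∈ A, b * a * star b ∈ A) ∧ (∀ a ∈ A, star b * a * b ∈ A)

/-- The inclusion `A ⊆ B` is nondegenerate: the closed span of `A·B` is `B`. -/
def Nondegenerate (A : Set B) : Prop :=
  closSpan {z : B | ∃ a ∈ A, ∃ b : B, z = a * b} = Set.univ

/-- The inclusion `A ⊆ B` is regular: nondegenerate and `B` is the closed linear span of
the normalisers of `A`. -/
def RegularInclusion (A : Set B) : Prop :=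
  Nondegenerate A ∧ closSpan {b : B | IsNormalizer A b} = Set.univ

end KM

open KM

variable {B : Type*} [NonUnitalCStarAlgebra B] [PartialOrder B] [StarOrderedRing B]

/- The crux is that residual support forces every ideal `J` of `B` to be generated by `J ∩ A`. By
symmetry an approximate unit of `J ∩ A` is then an approximate unit of `J`, so that a subequivalence
`a ≼ b` modulo `J` lifts to an honest one `‖a' - y* b y‖ ≤ s` with `a' ∈ A⁺` congruent to `a`
modulo `J`. Rørdam's lemma turns this into `z* z ∈ A` and `z z* ∈ D`, where `z* z` is a multiple of
`((a' - r)₊)²`, which is not in `J` as soon as `r` is less than the distance from `a` to `J`.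
Conversely, filling the hereditary subalgebra of all `d` with `d` and `d*` in the closed right
ideal of `b` gives a `z` in that ideal, and then `z* z ≼ b`. -/

namespace KM

open Set Filter Topology

section ApproxInv

/-- The element `h (h² + δ²)⁻¹`, an approximate inverse of the self-adjoint element `h`: as `δ → 0`
the products `h * approxInv h δ` act as an approximate unit on every element dominated by `h`. -/
noncomputable def approxInv (h : B) (δ : ℝ) : B :=
  cfcₙ (fun t : ℝ ↦ t / (t ^ 2 + δ ^ 2)) h

omit [PartialOrder B] [StarOrderedRing B]

lemma mul_approxInv {h : B} (hh : IsSelfAdjoint h) {δ : ℝ} (hδ : 0 < δ) :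
    h * approxInv h δ = cfcₙ (fun t : ℝ ↦ t * (t / (t ^ 2 + δ ^ 2))) h := by
  have hcont : Continuous fun t : ℝ ↦ t / (t ^ 2 + δ ^ 2) := by
    fun_prop (disch := intro; positivity)
  rw [cfcₙ_mul _ _ h (by fun_prop) rfl hcont.continuousOn (by simp), cfcₙ_id' ℝ h, approxInv]

lemma isSelfAdjoint_mul_approxInv {h : B} (hh : IsSelfAdjoint h) {δ : ℝ} (hδ : 0 < δ) :
    IsSelfAdjoint (h * approxInv h δ) := by
  rw [mul_approxInv hh hδ]
  exact .cfcₙ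

lemma norm_mul_approxInv_le_one {h : B} (hh : IsSelfAdjoint h) {δ : ℝ} (hδ : 0 < δ) :
    ‖h * approxInv h δ‖ ≤ 1 := by
  rw [mul_approxInv hh hδ]
  refine norm_cfcₙ_le fun t _ ↦ ?_
  rw [← mul_div_assoc, Real.norm_of_nonneg (div_nonneg (mul_self_nonneg t) (by positivity)),
    div_le_one (by positivity)]
  nlinarith [sq_nonneg δ]

lemma norm_sub_mul_mul_approxInv_le {h : B} (hh : IsSelfAdjoint h) {δ : ℝ} (hδ : 0 < δ) :
    ‖h - h * (h * approxInv h δ)‖ ≤ δ := by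
  have hcont : Continuous fun t : ℝ ↦ t * (t / (t ^ 2 + δ ^ 2)) := by
    fun_prop (disch := intro; positivity)
  have hcfc : h - h * (h * approxInv h δ) =
      cfcₙ (fun t : ℝ ↦ t - t * (t * (t / (t ^ 2 + δ ^ 2)))) h := by
    rw [cfcₙ_sub _ _ h (by fun_prop) rfl (by fun_prop) (by simp),
      cfcₙ_mul _ _ h (by fun_prop) rfl hcont.continuousOn (by simp), ← mul_approxInv hh hδ,
      cfcₙ_id' ℝ h]
  rw [hcfc]
  refine norm_cfcₙ_le fun t _ ↦ ?_
  have hpos : 0 < t ^ 2 + δ ^ 2 := by positivity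
  have hsub : t - t * (t * (t / (t ^ 2 + δ ^ 2))) = δ * (t * δ / (t ^ 2 + δ ^ 2)) := by
    field_simp
    ring
  have hratio : |t * δ / (t ^ 2 + δ ^ 2)| ≤ 1 := by
    rw [abs_div, abs_of_pos hpos, div_le_one hpos, abs_le]
    constructor <;> nlinarith [sq_nonneg (t + δ), sq_nonneg (t - δ)]
  rw [hsub, Real.norm_eq_abs, abs_mul, abs_of_pos hδ]
  exact mul_le_of_le_one_right hδ.le hratio

end ApproxInv

section Compress

/-- The compression `(1 - u)* y (1 - u)`, expanded so that it makes sense without a unit. -/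
def compress {R : Type*} [NonUnitalRing R] [Star R] (u y : R) : R :=
  (y - y * u) - star u * (y - y * u)

lemma compress_star_mul_mul {R : Type*} [NonUnitalRing R] [StarRing R] (u x y : R) :
    compress u (star x * y * x) = star (x - x * u) * y * (x - x * u) := by
  rw [compress, star_sub, star_mul]
  noncomm_ring

lemma compress_star_mul_self {R : Type*} [NonUnitalRing R] [StarRing R] (u x : R) :
    compress u (star x * x) = star (x - x * u) * (x - x * u) := by
  rw [compress, star_sub, star_mul]
  noncomm_ring

lemma compress_sub {R : Type*} [NonUnitalRing R] [Star R] (u x y : R) :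
    compress u (x - y) = compress u x - compress u y := by
  simp only [compress]
  noncomm_ring

lemma compress_nonneg (u : B) {y : B} (hy : 0 ≤ y) : 0 ≤ compress u y := by
  obtain ⟨x, rfl⟩ := CStarAlgebra.nonneg_iff_eq_star_mul_self.mp hy
  rw [compress_star_mul_self]
  exact star_mul_self_nonneg _

lemma compress_mono (u : B) {x y : B} (hxy : x ≤ y) : compress u x ≤ compress u y := by
  rw [← sub_nonneg, ← compress_sub]
  exact compress_nonneg u (sub_nonneg.mpr hxy)

section Norm

variable {R : Type*} [NonUnitalNormedRing R] [StarRing R] [NormedStarGroup R] {u : R}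

lemma norm_compress_le_two_mul (hu : ‖u‖ ≤ 1) (y : R) :
    ‖compress u y‖ ≤ 2 * ‖y - y * u‖ := by
  have hmul : ‖star u * (y - y * u)‖ ≤ ‖y - y * u‖ :=
    (norm_mul_le _ _).trans (mul_le_of_le_one_left (norm_nonneg _) (by rwa [norm_star]))
  calc ‖compress u y‖ ≤ ‖y - y * u‖ + ‖star u * (y - y * u)‖ := norm_sub_le _ _
    _ ≤ 2 * ‖y - y * u‖ := by linarith

lemma norm_compress_le_four_mul (hu : ‖u‖ ≤ 1) (y : R) : ‖compress u y‖ ≤ 4 * ‖y‖ := by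
  have hmul : ‖y * u‖ ≤ ‖y‖ :=
    (norm_mul_le _ _).trans (mul_le_of_le_one_right (norm_nonneg _) hu)
  linarith [norm_compress_le_two_mul hu y, norm_sub_le y (y * u)]

end Norm

lemma norm_sub_mul_le_norm_sub_mul {j h : B} (hj : star j * j ≤ star h * h) (u : B) :
    ‖j - j * u‖ ≤ ‖h - h * u‖ := by
  refine le_of_sq_le_sq ?_ (norm_nonneg _)
  rw [sq, sq, ← CStarRing.norm_star_mul_self, ← CStarRing.norm_star_mul_self,
    ← compress_star_mul_self, ← compress_star_mul_self]
  exact CStarAlgebra.norm_le_norm_of_nonneg_of_le (compress_nonneg u (star_mul_self_nonneg j))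
    (compress_mono u hj)

end Compress

section RightIdeal

/-- The closed right ideal of `B` generated by the elements `b * c`, i.e. the closure of `bB`. -/
def closedRightIdeal (b : B) : Submodule ℂ B :=
  (LinearMap.range (LinearMap.mulLeft ℂ b)).topologicalClosure

section Algebra

omit [PartialOrder B] [StarOrderedRing B]

lemma isClosed_closedRightIdeal (b : B) : IsClosed (closedRightIdeal b : Set B) :=
  Submodule.isClosed_topologicalClosure _

lemma mul_mem_closedRightIdeal (b c : B) : b * c ∈ closedRightIdeal b :=
  Submodule.le_topologicalClosure _ ⟨c, rfl⟩

lemma closedRightIdeal_subset {b : B} {S : Set B} (hS : IsClosed S) (h : ∀ c, b * c ∈ S) :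
    (closedRightIdeal b : Set B) ⊆ S :=
  closure_minimal (by rintro _ ⟨c, rfl⟩; exact h c) hS

lemma mul_mem_closedRightIdeal_of_mem {b x : B} (hx : x ∈ closedRightIdeal b) (y : B) :
    x * y ∈ closedRightIdeal b := by
  refine closedRightIdeal_subset (S := (· * y) ⁻¹' closedRightIdeal b)
    ((isClosed_closedRightIdeal b).preimage (by fun_prop)) (fun c ↦ ?_) hx
  simpa only [mem_preimage, SetLike.mem_coe, mul_assoc] using mul_mem_closedRightIdeal b (c * y)

end Algebra

lemma norm_sub_mul_mul_approxInv_le_of_star_mul_self_le {h j : B} (hh : IsSelfAdjoint h)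
    (hj : star j * j ≤ h * h) {δ : ℝ} (hδ : 0 < δ) : ‖j - j * (h * approxInv h δ)‖ ≤ δ :=
  (norm_sub_mul_le_norm_sub_mul (by rwa [hh.star_eq]) _).trans (norm_sub_mul_mul_approxInv_le hh hδ)

lemma tendsto_mul_mul_approxInv {h j : B} (hh : IsSelfAdjoint h) (hj : star j * j ≤ h * h) :
    Tendsto (fun δ ↦ j * (h * approxInv h δ)) (𝓝[>] 0) (𝓝 j) := by
  rw [tendsto_iff_norm_sub_tendsto_zero]
  refine squeeze_zero' (.of_forall fun _ ↦ norm_nonneg _) ?_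
    (tendsto_id.mono_left nhdsWithin_le_nhds)
  filter_upwards [self_mem_nhdsWithin] with δ hδ
  rw [norm_sub_rev]
  exact norm_sub_mul_mul_approxInv_le_of_star_mul_self_le hh hj hδ

lemma tendsto_mul_approxInv_mul_star {h j : B} (hh : IsSelfAdjoint h) (hj : star j * j ≤ h * h) :
    Tendsto (fun δ ↦ h * (approxInv h δ * star j)) (𝓝[>] 0) (𝓝 (star j)) := by
  refine (tendsto_mul_mul_approxInv hh hj).star.congr' ?_
  filter_upwards [self_mem_nhdsWithin] with δ hδ
  rw [star_mul, (isSelfAdjoint_mul_approxInv hh hδ).star_eq, mul_assoc]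

lemma sqrt_mem_closedRightIdeal {h : B} (hh : 0 ≤ h) : CFC.sqrt h ∈ closedRightIdeal h := by
  have hsqrt := CFC.sqrt_mul_sqrt_self h hh
  have hsa : IsSelfAdjoint (CFC.sqrt h) := (CFC.sqrt_nonneg h).isSelfAdjoint
  have hlim := tendsto_mul_mul_approxInv hsa (j := CFC.sqrt h) (by rw [hsa.star_eq])
  refine (isClosed_closedRightIdeal h).mem_of_tendsto hlim (.of_forall fun δ ↦ ?_)
  rw [← mul_assoc, hsqrt]
  exact mul_mem_closedRightIdeal h _

lemma mem_closedRightIdeal_of_mul_star_self_le {x h : B} (hx : x * star x ≤ h) :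
    x ∈ closedRightIdeal h := by
  have hh : 0 ≤ h := (mul_star_self_nonneg x).trans hx
  have hlim := tendsto_mul_approxInv_mul_star (h := CFC.sqrt h) (j := star x)
    (CFC.sqrt_nonneg h).isSelfAdjoint (by rwa [star_star, CFC.sqrt_mul_sqrt_self h hh])
  rw [star_star] at hlim
  exact (isClosed_closedRightIdeal h).mem_of_tendsto hlim
    (.of_forall fun δ ↦ mul_mem_closedRightIdeal_of_mem (sqrt_mem_closedRightIdeal hh) _)

lemma self_mem_closedRightIdeal (b : B) : b ∈ closedRightIdeal b := by
  refine closedRightIdeal_subset (isClosed_closedRightIdeal b) (fun c ↦ ?_)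
    (mem_closedRightIdeal_of_mul_star_self_le (le_refl (b * star b)))
  rw [mul_assoc]
  exact mul_mem_closedRightIdeal b _

-- `z` is the limit of `c * |c|⁻¹ * star j`, that is, `star j` transported by the polar part of `c`.
lemma exists_star_mul_self_eq_mul_star_self {c j : B} (hj : star j * j ≤ star c * c) :
    ∃ z ∈ closedRightIdeal c, star z * z = j * star j := by
  set h := CFC.abs c
  have hh : IsSelfAdjoint h := (CFC.abs_nonneg c).isSelfAdjoint
  have hhc : h * h = star c * c := CFC.abs_mul_abs c
  have hinner (v w : B) : star (c * v) * (c * w) = star (h * v) * (h * w) :=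
    calc star (c * v) * (c * w) = star v * (star c * c) * w := by simp only [star_mul, mul_assoc]
      _ = star (h * v) * (h * w) := by simp only [← hhc, star_mul, hh.star_eq, mul_assoc]
  have hnorm (v : B) : ‖c * v‖ = ‖h * v‖ := by
    rw [← sq_eq_sq₀ (norm_nonneg _) (norm_nonneg _), sq, sq, ← CStarRing.norm_star_mul_self,
      ← CStarRing.norm_star_mul_self, hinner]
  let v : ℝ → B := fun δ ↦ approxInv h δ * star j
  have hlim : Tendsto (fun δ ↦ h * v δ) (𝓝[>] 0) (𝓝 (star j)) :=
    tendsto_mul_approxInv_mul_star hh (hhc ▸ hj)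
  have hdist (δ δ' : ℝ) : dist (c * v δ) (c * v δ') = dist (h * v δ) (h * v δ') := by
    simp only [dist_eq_norm, ← mul_sub, hnorm]
  have hcauchy : Cauchy (map (fun δ ↦ c * v δ) (𝓝[>] 0)) := by
    simpa only [cauchy_map_iff, Metric.uniformity_eq_comap_nhds_zero, tendsto_comap_iff,
      Function.comp_def, hdist] using hlim.cauchy_map
  obtain ⟨z, hz⟩ := cauchy_map_iff_exists_tendsto.mp hcauchy
  refine ⟨z, (isClosed_closedRightIdeal c).mem_of_tendsto hz
    (.of_forall fun δ ↦ mul_mem_closedRightIdeal c (v δ)), tendsto_nhds_unique (hz.star.mul hz) ?_⟩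
  simpa only [hinner, star_star] using hlim.star.mul hlim

end RightIdeal

namespace IsSubCStar

variable {S T : Set B}

section Algebra

omit [PartialOrder B] [StarOrderedRing B]

/-- A C*-subalgebra given as a subset of `B`, bundled as a star subalgebra. -/
def toNonUnitalStarSubalgebra (hS : IsSubCStar S) : NonUnitalStarSubalgebra ℂ B where
  carrier := S
  add_mem' := fun {x y} hx hy ↦ hS.2.2.1 x hx y hy
  zero_mem' := hS.2.1
  mul_mem' := fun {x y} hx hy ↦ hS.2.2.2.2.1 x hx y hy
  smul_mem' := hS.2.2.2.1
  star_mem' := fun {x} hx ↦ hS.2.2.2.2.2 x hx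

lemma isClosed (hS : IsSubCStar S) : IsClosed S := hS.1

lemma zero_mem (hS : IsSubCStar S) : (0 : B) ∈ S := hS.2.1

lemma add_mem (hS : IsSubCStar S) {x y : B} (hx : x ∈ S) (hy : y ∈ S) : x + y ∈ S :=
  hS.2.2.1 x hx y hy

lemma mul_mem (hS : IsSubCStar S) {x y : B} (hx : x ∈ S) (hy : y ∈ S) : x * y ∈ S :=
  hS.2.2.2.2.1 x hx y hy

lemma star_mem (hS : IsSubCStar S) {x : B} (hx : x ∈ S) : star x ∈ S := hS.2.2.2.2.2 x hx

lemma sub_mem (hS : IsSubCStar S) {x y : B} (hx : x ∈ S) (hy : y ∈ S) : x - y ∈ S :=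
  _root_.sub_mem (show x ∈ hS.toNonUnitalStarSubalgebra from hx)
    (show y ∈ hS.toNonUnitalStarSubalgebra from hy)

lemma real_smul_mem (hS : IsSubCStar S) (r : ℝ) {x : B} (hx : x ∈ S) : r • x ∈ S := by
  rw [← Complex.coe_smul]
  exact hS.2.2.2.1 r x hx

lemma cfcₙ_mem (hS : IsSubCStar S) (f : ℝ → ℝ) {x : B} (hx : x ∈ S) : cfcₙ f x ∈ S :=
  have : IsClosed (hS.toNonUnitalStarSubalgebra : Set B) := hS.isClosed
  _root_.cfcₙ_mem (𝕜' := ℂ) (s := hS.toNonUnitalStarSubalgebra) f hx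

lemma inter (hS : IsSubCStar S) (hT : IsSubCStar T) : IsSubCStar (S ∩ T) :=
  ⟨hS.isClosed.inter hT.isClosed, ⟨hS.zero_mem, hT.zero_mem⟩,
    fun _ hx _ hy ↦ ⟨hS.add_mem hx.1 hy.1, hT.add_mem hx.2 hy.2⟩,
    fun c x hx ↦ ⟨hS.2.2.2.1 c x hx.1, hT.2.2.2.1 c x hx.2⟩,
    fun _ hx _ hy ↦ ⟨hS.mul_mem hx.1 hy.1, hT.mul_mem hx.2 hy.2⟩,
    fun _ hx ↦ ⟨hS.star_mem hx.1, hT.star_mem hx.2⟩⟩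

lemma closSpan_subset (hS : IsSubCStar S) (hTS : T ⊆ S) : closSpan T ⊆ S :=
  closure_minimal (Submodule.span_le (p := hS.toNonUnitalStarSubalgebra.toSubmodule).mpr hTS)
    hS.isClosed

lemma compress_mem (hS : IsSubCStar S) {u x : B} (hu : u ∈ S) (hx : x ∈ S) : compress u x ∈ S :=
  have hxu := hS.sub_mem hx (hS.mul_mem hx hu)
  hS.sub_mem hxu (hS.mul_mem (hS.star_mem hu) hxu)

end Algebra

lemma sqrt_mem (hS : IsSubCStar S) {x : B} (hx : x ∈ S) (hx0 : 0 ≤ x) : CFC.sqrt x ∈ S := by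
  rw [CFC.sqrt_eq_real_sqrt x hx0]
  exact hS.cfcₙ_mem _ hx

end IsSubCStar

namespace IsIdeal

variable {J : Set B}

section Algebra

omit [PartialOrder B] [StarOrderedRing B]

lemma isClosed (hJ : IsIdeal J) : IsClosed J := hJ.2.1

lemma zero_mem (hJ : IsIdeal J) : (0 : B) ∈ J := hJ.2.2.1

lemma mul_mem_left (hJ : IsIdeal J) (b : B) {x : B} (hx : x ∈ J) : b * x ∈ J :=
  (hJ.2.2.2.2.2 x hx b (mem_univ b)).1

lemma mul_mem_right (hJ : IsIdeal J) (b : B) {x : B} (hx : x ∈ J) : x * b ∈ J :=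
  (hJ.2.2.2.2.2 x hx b (mem_univ b)).2

end Algebra

lemma star_mem_of_star_mul_self_mem (hJ : IsIdeal J) {x : B} (hx : star x * x ∈ J) :
    star x ∈ J :=
  closedRightIdeal_subset hJ.isClosed (fun c ↦ hJ.mul_mem_right c hx)
    (mem_closedRightIdeal_of_mul_star_self_le (by rw [star_star]))

lemma star_mem (hJ : IsIdeal J) {x : B} (hx : x ∈ J) : star x ∈ J :=
  hJ.star_mem_of_star_mul_self_mem (hJ.mul_mem_left _ hx)

lemma star_mul_self_mem_iff (hJ : IsIdeal J) {x : B} : star x * x ∈ J ↔ x ∈ J :=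
  ⟨fun hx ↦ star_star x ▸ hJ.star_mem (hJ.star_mem_of_star_mul_self_mem hx),
    fun hx ↦ hJ.mul_mem_left _ hx⟩

lemma isSubCStar (hJ : IsIdeal J) : IsSubCStar J :=
  ⟨hJ.isClosed, hJ.zero_mem, hJ.2.2.2.1, hJ.2.2.2.2.1, fun x _ _ hy ↦ hJ.mul_mem_left x hy,
    fun _ hx ↦ hJ.star_mem hx⟩

lemma sub_compress_mem (hJ : IsIdeal J) {u : B} (hu : u ∈ J) (x : B) : x - compress u x ∈ J := by
  have hsplit : x - compress u x = x * u + star u * (x - x * u) := by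
    rw [compress]
    abel
  rw [hsplit]
  exact hJ.isSubCStar.add_mem (hJ.mul_mem_left _ hu) (hJ.mul_mem_right _ (hJ.star_mem hu))

end IsIdeal

section Hereditary

lemma isHereditary_of_mul_mem {R : Submodule ℂ B} (hR : IsClosed (R : Set B))
    (hmul : ∀ x ∈ R, ∀ y, x * y ∈ R) : IsHereditary {d : B | d ∈ R ∧ star d ∈ R} := by
  refine ⟨⟨hR.inter (hR.preimage continuous_star), ⟨R.zero_mem, ?_⟩, ?_, ?_, ?_, ?_⟩, ?_⟩
  · rw [star_zero]
    exact R.zero_mem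
  · rintro x ⟨hx, hx'⟩ y ⟨hy, hy'⟩
    exact ⟨R.add_mem hx hy, star_add x y ▸ R.add_mem hx' hy'⟩
  · rintro c x ⟨hx, hx'⟩
    exact ⟨R.smul_mem c hx, star_smul c x ▸ R.smul_mem (star c) hx'⟩
  · rintro x ⟨hx, -⟩ y ⟨-, hy'⟩
    exact ⟨hmul x hx y, star_mul x y ▸ hmul _ hy' (star x)⟩
  · rintro x ⟨hx, hx'⟩
    exact ⟨hx', (star_star x).symm ▸ hx⟩
  · rintro x d ⟨hd, -⟩ hx hxd
    have hsqrt : CFC.sqrt x ∈ R := by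
      refine closedRightIdeal_subset hR (hmul d hd) (mem_closedRightIdeal_of_mul_star_self_le ?_)
      rwa [(CFC.sqrt_nonneg x).isSelfAdjoint.star_eq, CFC.sqrt_mul_sqrt_self x hx]
    have hxR : x ∈ R := CFC.sqrt_mul_sqrt_self x hx ▸ hmul _ hsqrt _
    exact ⟨hxR, hx.isSelfAdjoint.star_eq.symm ▸ hxR⟩

lemma IsHereditary.mul_star_self_mem {D : Set B} (hD : IsHereditary D) {d z : B}
    (hd : d * star d ∈ D) (hz : z ∈ closedRightIdeal d) : z * star z ∈ D := by
  refine closedRightIdeal_subset (S := (fun w ↦ w * star w) ⁻¹' D)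
    (hD.1.isClosed.preimage (by fun_prop)) (fun c ↦ ?_) hz
  have hle : d * c * star (d * c) ≤ ‖c * star c‖ • (d * star d) := by
    simpa only [star_mul, mul_assoc] using
      CStarAlgebra.star_right_conjugate_le_norm_smul (a := d) (IsSelfAdjoint.mul_star_self c)
  exact hD.2 _ _ (hD.1.real_smul_mem _ hd) (mul_star_self_nonneg _) hle

lemma cuntzBelow_star_mul_self {b z : B} (hb : 0 ≤ b) (hz : z ∈ closedRightIdeal b) :
    CuntzBelow (star z * z) b := by
  intro ε hε
  have hopen : IsOpen {w : B | ‖star z * z - star w * w‖ < ε} :=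
    isOpen_lt (by fun_prop) continuous_const
  obtain ⟨_, hlt, c, rfl⟩ := mem_closure_iff.mp hz _ hopen (by simpa using hε)
  have hconj : star (CFC.sqrt b * c) * b * (CFC.sqrt b * c) = star (b * c) * (b * c) :=
    calc star (CFC.sqrt b * c) * b * (CFC.sqrt b * c)
        = star c * (CFC.sqrt b * b * CFC.sqrt b) * c := by
          simp only [star_mul, (CFC.sqrt_nonneg b).isSelfAdjoint.star_eq, mul_assoc]
      _ = star c * (CFC.sqrt b * CFC.sqrt b * (CFC.sqrt b * CFC.sqrt b)) * c := by
          nth_rw 2 [← CFC.sqrt_mul_sqrt_self b hb]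
          simp only [mul_assoc]
      _ = star (b * c) * (b * c) := by
          simp only [CFC.sqrt_mul_sqrt_self b hb, star_mul, hb.isSelfAdjoint.star_eq, mul_assoc]
  exact ⟨CFC.sqrt b * c, by rw [hconj]; exact hlt⟩

theorem Fills.residuallySupports {F : Set B} (hF : Fills F) : ResiduallySupports F := by
  intro J (hJ : IsIdeal J) b _ hb hbJ
  have hD : IsHereditary {d : B | d ∈ closedRightIdeal b ∧ star d ∈ closedRightIdeal b} :=
    isHereditary_of_mul_mem (isClosed_closedRightIdeal b)
      fun _ hx ↦ mul_mem_closedRightIdeal_of_mem hx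
  have hbD : b ∈ closedRightIdeal b ∧ star b ∈ closedRightIdeal b :=
    ⟨self_mem_closedRightIdeal b, hb.isSelfAdjoint.star_eq.symm ▸ self_mem_closedRightIdeal b⟩
  have hb0 : b ≠ 0 := fun h ↦ hbJ (h ▸ hJ.zero_mem)
  obtain ⟨z, hzJ, ⟨hzb, -⟩, hzF⟩ := hF _ hD ⟨b, hbD, hb0⟩ J hJ fun h ↦ hbJ (h hbD)
  have hz : z ∈ closedRightIdeal b :=
    closedRightIdeal_subset (isClosed_closedRightIdeal b)
      (mul_mem_closedRightIdeal_of_mem hzb) (mem_closedRightIdeal_of_mul_star_self_le le_rfl)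
  refine ⟨star z * z, hzF, fun h ↦ hzJ (hJ.star_mul_self_mem_iff.mp h), fun ε hε ↦ ?_⟩
  obtain ⟨x, hx⟩ := cuntzBelow_star_mul_self hb hz ε hε
  refine ⟨x, mem_univ x, (Metric.infDist_le_dist_of_mem hJ.zero_mem).trans_lt ?_⟩
  rwa [dist_zero_right]

end Hereditary

section CutDown

/-- The cut-down `(a - r)₊` of a positive element `a` at height `r ≥ 0`. -/
noncomputable def cutDown (r : ℝ) (a : B) : B := cfcₙ (fun t : ℝ ↦ max (t - r) 0) a

omit [PartialOrder B] [StarOrderedRing B] in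
lemma isSelfAdjoint_cutDown (r : ℝ) (a : B) : IsSelfAdjoint (cutDown r a) := .cfcₙ

lemma norm_sub_cutDown_le {a : B} (ha : 0 ≤ a) {r : ℝ} (hr : 0 ≤ r) : ‖a - cutDown r a‖ ≤ r := by
  have hcfc : a - cutDown r a = cfcₙ (fun t : ℝ ↦ t - max (t - r) 0) a := by
    rw [cfcₙ_sub _ _ a (by fun_prop) rfl (by fun_prop) (by simpa using hr), cfcₙ_id' ℝ a, cutDown]
  rw [hcfc]
  refine norm_cfcₙ_le fun t ht ↦ ?_
  have ht0 : 0 ≤ t := quasispectrum_nonneg_of_nonneg a ha t ht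
  rw [Real.norm_eq_abs, abs_le]
  rcases max_cases (t - r) 0 with h | h <;> constructor <;> linarith

lemma smul_cutDown_mul_cutDown_le {a : B} (ha : IsSelfAdjoint a) {r : ℝ} (hr : 0 ≤ r) :
    r • (cutDown r a * cutDown r a) ≤ cutDown r a * a * cutDown r a := by
  set g : ℝ → ℝ := fun t ↦ max (t - r) 0 with hg
  have : Continuous g := by fun_prop
  have hg_zero : g 0 = 0 := by simpa [hg] using hr
  have hleft : r • (cutDown r a * cutDown r a) = cfcₙ (fun t : ℝ ↦ r * (g t * g t)) a := by
    rw [cfcₙ_const_mul r _ a (by fun_prop) (by simp [hg_zero]),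
      cfcₙ_mul _ _ a (by fun_prop) hg_zero (by fun_prop) hg_zero, cutDown]
  have hright : cutDown r a * a * cutDown r a = cfcₙ (fun t : ℝ ↦ g t * t * g t) a := by
    rw [cfcₙ_mul _ _ a (by fun_prop) (by simp) (by fun_prop) hg_zero,
      cfcₙ_mul _ _ a (by fun_prop) hg_zero (by fun_prop) rfl, cfcₙ_id' ℝ a, cutDown]
  rw [hleft, hright]
  refine cfcₙ_mono (fun t _ ↦ ?_) (by fun_prop) (by fun_prop) (by simp [hg_zero]) (by simp)
  rcases max_cases (t - r) 0 with ⟨h, h'⟩ | ⟨h, -⟩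
  · simp only [hg, h]
    nlinarith [mul_self_nonneg (t - r)]
  · simp only [hg, h, mul_zero, zero_mul, le_refl]

lemma IsIdeal.cutDown_notMem {J : Set B} (hJ : IsIdeal J) {a a' : B} (ha' : 0 ≤ a')
    (haa' : a - a' ∈ J) {r : ℝ} (hr0 : 0 ≤ r) (hr : r < Metric.infDist a J) :
    cutDown r a' ∉ J := by
  intro hmem
  have hsum : a - a' + cutDown r a' ∈ J := hJ.isSubCStar.add_mem haa' hmem
  have hdist : dist a (a - a' + cutDown r a') ≤ r := by
    rw [dist_eq_norm, ← sub_sub, sub_sub_cancel]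
    exact norm_sub_cutDown_le ha' hr0
  exact hr.not_ge ((Metric.infDist_le_dist_of_mem hsum).trans hdist)

lemma smul_cutDown_mul_cutDown_le_of_norm_sub_le {a y : B} (ha : IsSelfAdjoint a)
    (hy : IsSelfAdjoint y) {r s : ℝ} (hs : ‖a - y‖ ≤ s) (hr : 0 ≤ r) :
    (r - s) • (cutDown r a * cutDown r a) ≤ cutDown r a * y * cutDown r a := by
  set e := cutDown r a
  have hsa : star e = e := (isSelfAdjoint_cutDown r a).star_eq
  have he0 : 0 ≤ e * e := by simpa only [hsa] using star_mul_self_nonneg e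
  have herr : e * (a - y) * e ≤ s • (e * e) := by
    refine le_trans ?_ (smul_le_smul_of_nonneg_right hs he0)
    simpa only [hsa] using CStarAlgebra.star_left_conjugate_le_norm_smul (a := e) (ha.sub hy)
  calc (r - s) • (e * e) = r • (e * e) - s • (e * e) := sub_smul _ _ _
    _ ≤ e * a * e - e * (a - y) * e := sub_le_sub (smul_cutDown_mul_cutDown_le ha hr) herr
    _ = e * y * e := by noncomm_ring

lemma IsHereditary.exists_star_mul_self_eq_smul_cutDown {D : Set B} (hD : IsHereditary D)
    {a b x : B} (hb : 0 ≤ b) (hbD : b ∈ D) (ha : IsSelfAdjoint a) {r s : ℝ} (hsr : s ≤ r)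
    (hx : ‖a - star x * b * x‖ ≤ s) :
    ∃ z : B, z * star z ∈ D ∧ star z * z = (r - s) • (cutDown r a * cutDown r a) := by
  set e := cutDown r a
  have he : star e = e := (isSelfAdjoint_cutDown r a).star_eq
  have hsqrt : star (CFC.sqrt b) = CFC.sqrt b := (CFC.sqrt_nonneg b).isSelfAdjoint.star_eq
  let j := Real.sqrt (r - s) • e
  have hj : star j = j := by rw [star_smul, he, star_trivial]
  have hjj : j * j = (r - s) • (e * e) := by
    rw [smul_mul_smul_comm, Real.mul_self_sqrt (sub_nonneg.mpr hsr)]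
  have hc : star (CFC.sqrt b * (x * e)) * (CFC.sqrt b * (x * e)) = e * (star x * b * x) * e :=
    calc star (CFC.sqrt b * (x * e)) * (CFC.sqrt b * (x * e))
        = e * (star x * (CFC.sqrt b * CFC.sqrt b) * x) * e := by
          simp only [star_mul, he, hsqrt, mul_assoc]
      _ = e * (star x * b * x) * e := by rw [CFC.sqrt_mul_sqrt_self b hb]
  have hle : star j * j ≤ star (CFC.sqrt b * (x * e)) * (CFC.sqrt b * (x * e)) := by
    rw [hj, hjj, hc]
    exact smul_cutDown_mul_cutDown_le_of_norm_sub_le ha (hb.isSelfAdjoint.conjugate' x) hx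
      ((norm_nonneg _).trans (hx.trans hsr))
  obtain ⟨z, hz, hzj⟩ := exists_star_mul_self_eq_mul_star_self hle
  have hzb : z ∈ closedRightIdeal (CFC.sqrt b) :=
    closedRightIdeal_subset (isClosed_closedRightIdeal _)
      (mul_mem_closedRightIdeal_of_mem (mul_mem_closedRightIdeal _ _)) hz
  refine ⟨z, hD.mul_star_self_mem ?_ hzb, by rw [hzj, hj, hjj]⟩
  rwa [hsqrt, CFC.sqrt_mul_sqrt_self b hb]

end CutDown

section Span

lemma star_add_mul_add_le (x y : B) :
    star (x + y) * (x + y) ≤ (2 : ℝ) • (star x * x + star y * y) := by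
  have hdiff : (2 : ℝ) • (star x * x + star y * y) - star (x + y) * (x + y) =
      star (x - y) * (x - y) := by
    rw [two_smul, star_add, star_sub]
    noncomm_ring
  rw [← sub_nonneg, hdiff]
  exact star_mul_self_nonneg _

lemma IsSubCStar.exists_star_mul_self_le {I : Set B} (hI : IsSubCStar I) {w : B}
    (hw : w ∈ Submodule.span ℂ {z : B | ∃ b : B, ∃ x ∈ I, z = b * x}) :
    ∃ h ∈ I, star w * w ≤ h := by
  induction hw using Submodule.span_induction with
  | mem w hw =>
    obtain ⟨b, x, hx, rfl⟩ := hw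
    refine ⟨‖star b * b‖ • (star x * x), hI.real_smul_mem _ (hI.mul_mem (hI.star_mem hx) hx), ?_⟩
    simpa only [star_mul, mul_assoc] using
      CStarAlgebra.star_left_conjugate_le_norm_smul (a := x) (IsSelfAdjoint.star_mul_self b)
  | zero => exact ⟨0, hI.zero_mem, by rw [mul_zero]⟩
  | add v w _ _ hv hw =>
    obtain ⟨g, hg, hvg⟩ := hv
    obtain ⟨h, hh, hwh⟩ := hw
    exact ⟨(2 : ℝ) • (g + h), hI.real_smul_mem _ (hI.add_mem hg hh),
      (star_add_mul_add_le v w).trans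
        (smul_le_smul_of_nonneg_left (add_le_add hvg hwh) zero_le_two)⟩
  | smul c w _ hw =>
    obtain ⟨h, hh, hwh⟩ := hw
    refine ⟨‖c‖ ^ 2 • h, hI.real_smul_mem _ hh, ?_⟩
    have hscale : star (c • w) * (c • w) = ‖c‖ ^ 2 • (star w * w) := by
      rw [star_smul, smul_mul_smul_comm, RCLike.star_def, RCLike.conj_mul, ← Complex.coe_smul]
      norm_cast
    rw [hscale]
    exact smul_le_smul_of_nonneg_left hwh (by positivity)

lemma IsSubCStar.exists_norm_sub_mul_lt {I : Set B} (hI : IsSubCStar I) {j : B}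
    (hj : j ∈ closSpan {z : B | ∃ b : B, ∃ x ∈ I, z = b * x}) {ε : ℝ} (hε : 0 < ε) :
    ∃ u ∈ I, ‖u‖ ≤ 1 ∧ ‖j - j * u‖ < ε := by
  obtain ⟨w, hw, hjw⟩ := Metric.mem_closure_iff.mp hj (ε / 3) (by positivity)
  rw [dist_eq_norm] at hjw
  obtain ⟨h, hhI, hwh⟩ := hI.exists_star_mul_self_le hw
  have hh : 0 ≤ h := (star_mul_self_nonneg w).trans hwh
  have hsa : IsSelfAdjoint (CFC.sqrt h) := (CFC.sqrt_nonneg h).isSelfAdjoint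
  have hsqrt : CFC.sqrt h ∈ I := hI.sqrt_mem hhI hh
  set u := CFC.sqrt h * approxInv (CFC.sqrt h) (ε / 3)
  have hu : ‖u‖ ≤ 1 := norm_mul_approxInv_le_one hsa (by positivity)
  have hwu : ‖w - w * u‖ ≤ ε / 3 :=
    norm_sub_mul_mul_approxInv_le_of_star_mul_self_le hsa
      (by rwa [CFC.sqrt_mul_sqrt_self h hh]) (by positivity)
  refine ⟨u, hI.mul_mem hsqrt (hI.cfcₙ_mem _ hsqrt), hu, ?_⟩
  calc ‖j - j * u‖ = ‖(j - w) + (w - w * u) - (j - w) * u‖ := by congr 1; noncomm_ring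
    _ ≤ ‖j - w‖ + ‖w - w * u‖ + ‖j - w‖ * ‖u‖ :=
      (norm_sub_le _ _).trans (add_le_add (norm_add_le _ _) (norm_mul_le _ _))
    _ ≤ ‖j - w‖ + ‖w - w * u‖ + ‖j - w‖ := by
      gcongr
      exact mul_le_of_le_one_right (norm_nonneg _) hu
    _ < ε := by linarith

omit [PartialOrder B] [StarOrderedRing B] in
lemma mapsTo_closSpan (f : B →L[ℂ] B) {S T : Set B} (h : MapsTo f S (closSpan T)) :
    MapsTo f (closSpan S) (closSpan T) := by
  have hspan : Submodule.span ℂ S ≤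
      (Submodule.span ℂ T).topologicalClosure.comap f.toLinearMap := Submodule.span_le.mpr h
  exact closure_minimal hspan (isClosed_closure.preimage f.continuous)

omit [PartialOrder B] [StarOrderedRing B] in
lemma subset_closSpan (S : Set B) : S ⊆ closSpan S :=
  Submodule.subset_span.trans subset_closure

omit [PartialOrder B] [StarOrderedRing B] in
lemma isIdeal_closSpan {I : Set B}
    (hI : closSpan {z : B | ∃ x ∈ I, ∃ b : B, z = x * b} =
      closSpan {z : B | ∃ b : B, ∃ x ∈ I, z = b * x}) :
    IsIdeal (closSpan {z : B | ∃ x ∈ I, ∃ b : B, z = x * b}) := by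
  set R := Submodule.span ℂ {z : B | ∃ x ∈ I, ∃ b : B, z = x * b}
  refine ⟨subset_univ _, isClosed_closure, R.topologicalClosure.zero_mem,
    fun _ hx _ hy ↦ R.topologicalClosure.add_mem hx hy,
    fun c _ hx ↦ R.topologicalClosure.smul_mem c hx, fun y hy c _ ↦ ⟨?_, ?_⟩⟩
  · rw [hI] at hy ⊢
    refine mapsTo_closSpan (ContinuousLinearMap.mul ℂ B c) ?_ hy
    rintro _ ⟨b, x, hx, rfl⟩
    exact subset_closSpan _ ⟨c * b, x, hx, (mul_assoc c b x).symm⟩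
  · refine mapsTo_closSpan ((ContinuousLinearMap.mul ℂ B).flip c) ?_ hy
    rintro _ ⟨x, hx, b, rfl⟩
    exact subset_closSpan _ ⟨x, hx, b * c, mul_assoc x b c⟩

lemma subset_closSpan_mul (I : Set B) : I ⊆ closSpan {z : B | ∃ x ∈ I, ∃ b : B, z = x * b} := by
  refine fun x hx ↦ closedRightIdeal_subset isClosed_closure (fun b ↦ ?_)
    (self_mem_closedRightIdeal x)
  exact subset_closSpan _ ⟨x, hx, b, rfl⟩

end Span

section Lifting

variable {A J K : Set B}

omit [PartialOrder B] [StarOrderedRing B] in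
lemma IsIdeal.mem_of_forall_infDist_lt (hJ : IsIdeal J) (hK : IsIdeal K) (hKJ : K ⊆ J) {a b : B}
    (hb : b ∈ J) (h : ∀ ε : ℝ, 0 < ε → ∃ x : B, Metric.infDist (a - star x * b * x) K < ε) :
    a ∈ J := by
  rw [← hJ.isClosed.closure_eq, Metric.mem_closure_iff]
  intro ε hε
  obtain ⟨x, hx⟩ := h ε hε
  obtain ⟨k, hk, hdist⟩ := (Metric.infDist_lt_iff ⟨0, hK.zero_mem⟩).mp hx
  refine ⟨star x * b * x + k,
    hJ.2.2.2.1 _ (hJ.mul_mem_right x (hJ.mul_mem_left _ hb)) _ (hKJ hk), ?_⟩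
  rwa [dist_eq_norm, ← sub_sub, ← dist_eq_norm]

-- Residual support modulo the ideal generated by `J ∩ A` leaves no room for a larger `J`: an
-- element of `A` below `b ∈ J` modulo that ideal already lies in `J ∩ A`.
lemma ResiduallySupports.subset_closSpan_inter {F : Set B} (hF : F ⊆ A)
    (hR : ResiduallySupports F) (hJ : IsIdeal J)
    (hsym : closSpan {z : B | ∃ x ∈ J ∩ A, ∃ b : B, z = x * b} =
      closSpan {z : B | ∃ b : B, ∃ x ∈ J ∩ A, z = b * x}) :
    J ⊆ closSpan {z : B | ∃ x ∈ J ∩ A, ∃ b : B, z = x * b} := by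
  have hK := isIdeal_closSpan hsym
  set K := closSpan {z : B | ∃ x ∈ J ∩ A, ∃ b : B, z = x * b}
  have hKJ : K ⊆ J := by
    refine hJ.isSubCStar.closSpan_subset ?_
    rintro _ ⟨x, hx, b, rfl⟩
    exact hJ.mul_mem_right b hx.1
  intro j hj
  rw [← hK.star_mul_self_mem_iff]
  by_contra hjK
  obtain ⟨a, haF, haK, ha⟩ := hR K hK _ (mem_univ _) (star_mul_self_nonneg j) hjK
  suffices haJ : a ∈ J from haK (subset_closSpan_mul (J ∩ A) ⟨haJ, hF haF⟩)
  refine hJ.mem_of_forall_infDist_lt hK hKJ (hJ.star_mul_self_mem_iff.mpr hj) fun ε hε ↦ ?_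
  obtain ⟨x, -, hx⟩ := ha ε hε
  exact ⟨x, hx⟩

-- Compressing by `1 - u`, with `u` in an approximate unit of `J ∩ A`, kills the error term from `J`
-- while changing `a` only within `J ∩ A`.
lemma IsIdeal.exists_norm_sub_le_of_infDist_lt (hJ : IsIdeal J) (hA : IsSubCStar A)
    (hJA : J ⊆ closSpan {z : B | ∃ b : B, ∃ x ∈ J ∩ A, z = b * x}) {a b x : B} (ha : a ∈ A)
    (ha0 : 0 ≤ a) {ε : ℝ} (hε : 0 < ε) (hx : Metric.infDist (a - star x * b * x) J < ε) :
    ∃ a' ∈ A, 0 ≤ a' ∧ a - a' ∈ J ∧ ∃ y : B, ‖a' - star y * b * y‖ ≤ 6 * ε := by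
  obtain ⟨j, hj, hdist⟩ := (Metric.infDist_lt_iff ⟨0, hJ.zero_mem⟩).mp hx
  rw [dist_eq_norm] at hdist
  obtain ⟨u, hu, hu1, hju⟩ := (hJ.isSubCStar.inter hA).exists_norm_sub_mul_lt (hJA hj) hε
  refine ⟨compress u a, hA.compress_mem hu.2 ha, compress_nonneg u ha0,
    hJ.sub_compress_mem hu.1 a, x - x * u, ?_⟩
  calc ‖compress u a - star (x - x * u) * b * (x - x * u)‖
      = ‖compress u (a - star x * b * x - j) + compress u j‖ := by
        rw [← compress_star_mul_mul, ← compress_sub, compress_sub u _ j, sub_add_cancel]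
    _ ≤ 4 * ‖a - star x * b * x - j‖ + 2 * ‖j - j * u‖ :=
        (norm_add_le _ _).trans
          (add_le_add (norm_compress_le_four_mul hu1 _) (norm_compress_le_two_mul hu1 _))
    _ ≤ 6 * ε := by linarith

end Lifting

theorem ResiduallySupports.fills {A : Set B} (hR : ResiduallySupports {a : B | a ∈ A ∧ 0 ≤ a})
    (hA : IsSubCStar A) (hsym : SymmetricInclusion A) : Fills {a : B | a ∈ A ∧ 0 ≤ a} := by
  intro D hD _ J hJ hDJ
  have hsymJ := hsym (J ∩ A) ⟨J, hJ, rfl⟩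
  have hJA := hR.subset_closSpan_inter (fun a ha ↦ ha.1) hJ hsymJ
  obtain ⟨d, hdD, hdJ⟩ := not_subset.mp hDJ
  have hb : 0 ≤ star d * d := star_mul_self_nonneg d
  have hbD : star d * d ∈ D := hD.1.mul_mem (hD.1.star_mem hdD) hdD
  obtain ⟨a, ⟨haA, ha0⟩, haJ, ha⟩ :=
    hR J hJ _ (mem_univ _) hb (mt hJ.star_mul_self_mem_iff.mp hdJ)
  set η := Metric.infDist a J
  have hη : 0 < η := (hJ.isClosed.notMem_iff_infDist_pos ⟨0, hJ.zero_mem⟩).mp haJ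
  obtain ⟨x, -, hx⟩ := ha (η / 18) (by positivity)
  obtain ⟨a', ha'A, ha'0, haa', y, hy⟩ :=
    hJ.exists_norm_sub_le_of_infDist_lt hA (hsymJ ▸ hJA) haA ha0 (by positivity) hx
  obtain ⟨z, hzD, hz⟩ := hD.exists_star_mul_self_eq_smul_cutDown hb hbD ha'0.isSelfAdjoint
    (show 6 * (η / 18) ≤ η / 2 by linarith) hy
  have he : cutDown (η / 2) a' ∉ J :=
    hJ.cutDown_notMem ha'0 haa' (by positivity) (half_lt_self hη)
  have heA : cutDown (η / 2) a' ∈ A := hA.cfcₙ_mem _ ha'A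
  refine ⟨z, fun hzJ ↦ he ?_, hzD, ?_, star_mul_self_nonneg z⟩
  · have hmem := hJ.isSubCStar.real_smul_mem (η / 2 - 6 * (η / 18))⁻¹
      (hJ.star_mul_self_mem_iff.mpr hzJ)
    rw [hz, inv_smul_smul₀ (by linarith)] at hmem
    exact hJ.star_mul_self_mem_iff.mp (by rwa [(isSelfAdjoint_cutDown _ _).star_eq])
  · rw [hz]
    exact hA.real_smul_mem _ (hA.mul_mem heA heA)

end KM

/-- For a symmetric C*-inclusion `A ⊆ B`, the positive cone `A⁺` residually supports `B`
if and only if `A⁺` fills `B`. -/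
theorem stmt1 (A : Set B) (hA : IsSubCStar A) (hsym : SymmetricInclusion A) :
    ResiduallySupports {a : B | a ∈ A ∧ 0 ≤ a} ↔ Fills {a : B | a ∈ A ∧ 0 ≤ a} :=
  ⟨fun hR ↦ hR.fills hA hsym, Fills.residuallySupports⟩
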